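/- Weak Poincaré inequality: let V(x) = ⟨x⟩^γ with γ ∈ (0,1). There exists λ > 0 such that for every smooth compactly supported u : ℝ^d → ℝ satisfying ∫ u e^{-V} ⟨x⟩^{2(1-γ)} dx = 0, one has ∫ u² ⟨x⟩^{2(γ-1)} e^{-V} dx ≤ λ ∫ |∇u|² e^{-V} dx. -/

import Mathlib

open MeasureTheory Real

noncomputable section

lemma wp_scale {d : ℕ} (G : EuclideanSpace ℝ (Fin d) → ENNReal) (hG : Measurable G)
    (c : EuclideanSpace ℝ (Fin d)) (t : ℝ) (ht : 1/2 ≤ t) :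
    ∫⁻ y, G (c + t • y) ≤ ENNReal.ofReal (2 ^ d) * ∫⁻ y, G y := by
  have ht0 : 0 < t := by linarith
  have h1 : ∫⁻ y, G (c + t • y) = ∫⁻ z, G (c + z) ∂(Measure.map (t • ·) volume) := by
    rw [lintegral_map (by fun_prop) (by fun_prop)]
  rw [h1, Measure.map_addHaar_smul _ ht0.ne', lintegral_smul_measure,
    lintegral_add_left_eq_self G c, smul_eq_mul]
  gcongr
  rw [finrank_euclideanSpace_fin, abs_of_pos (by positivity), ← inv_pow]
  gcongr
  rw [inv_le_comm₀ ht0 (by norm_num)]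
  linarith

lemma wp_seg {d : ℕ} (u : EuclideanSpace ℝ (Fin d) → ℝ) (hu : ContDiff ℝ 1 u) (R : ℝ)
    (x y : EuclideanSpace ℝ (Fin d)) (hx : ‖x‖ ≤ R) (hy : ‖y‖ ≤ R) :
    (u y - u x) ^ 2 ≤ ∫ t in (0:ℝ)..1, 4 * R ^ 2 * ‖fderiv ℝ u ((1 - t) • x + t • y)‖ ^ 2 := by
  have hfc : Continuous (fderiv ℝ u) := hu.continuous_fderiv (by norm_num)
  set h : ℝ → ℝ := fun t => fderiv ℝ u ((1 - t) • x + t • y) (y - x) with hh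
  have hc : Continuous h := by
    have : Continuous (fun t : ℝ => fderiv ℝ u ((1 - t) • x + t • y)) := by fun_prop
    exact this.clm_apply continuous_const
  have hI : ∫ t in (0:ℝ)..1, h t = u y - u x := by
    have hd : ∀ t ∈ Set.uIcc (0:ℝ) 1, HasDerivAt (fun t : ℝ => u ((1 - t) • x + t • y)) (h t) t := by
      intro t _
      have h1 : HasDerivAt (fun t : ℝ => (1 - t) • x + t • y) (y - x) t := by
        have := (((hasDerivAt_id t).const_sub 1).smul_const x).add ((hasDerivAt_id t).smul_const y)
        have e : (-1 : ℝ) • x + (1 : ℝ) • y = y - x := by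
          rw [neg_smul, one_smul, one_smul]; abel
        exact e ▸ this
      exact ((hu.differentiable (by norm_num)) _).hasFDerivAt.comp_hasDerivAt t h1
    rw [intervalIntegral.integral_eq_sub_of_hasDerivAt hd (hc.intervalIntegrable _ _)]
    simp
  set c := u y - u x with hcdef
  have h0 : 0 ≤ ∫ t in (0:ℝ)..1, (h t - c) ^ 2 :=
    intervalIntegral.integral_nonneg (by norm_num) (fun t _ => sq_nonneg _)
  have h1 : ∫ t in (0:ℝ)..1, (h t - c) ^ 2 = (∫ t in (0:ℝ)..1, h t ^ 2) - c ^ 2 := by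
    have : ∀ t, (h t - c) ^ 2 = h t ^ 2 - 2 * c * h t + c ^ 2 := fun t => by ring
    simp_rw [this]
    rw [intervalIntegral.integral_add, intervalIntegral.integral_sub,
      intervalIntegral.integral_const_mul, hI]
    · simp; ring
    all_goals exact Continuous.intervalIntegrable (by fun_prop) _ _
  have h2 : ∫ t in (0:ℝ)..1, h t ^ 2 ≤
      ∫ t in (0:ℝ)..1, 4 * R ^ 2 * ‖fderiv ℝ u ((1 - t) • x + t • y)‖ ^ 2 := by
    apply intervalIntegral.integral_mono_on (by norm_num)
    · exact Continuous.intervalIntegrable (by fun_prop) _ _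
    · exact Continuous.intervalIntegrable (by fun_prop) _ _
    · intro t _
      have a1 : |h t| ≤ ‖fderiv ℝ u ((1 - t) • x + t • y)‖ * (2 * R) := by
        rw [← Real.norm_eq_abs]
        refine (ContinuousLinearMap.le_opNorm _ _).trans ?_
        gcongr
        exact (norm_sub_le _ _).trans (by linarith)
      rw [← sq_abs]
      calc |h t| ^ 2 ≤ (‖fderiv ℝ u ((1 - t) • x + t • y)‖ * (2 * R)) ^ 2 := by gcongr
        _ = _ := by ring
  linarith

lemma wp_ball (d : ℕ) (R : ℝ) (hR : 0 < R) :
    ∃ C : ℝ, 0 < C ∧ ∀ u : EuclideanSpace ℝ (Fin d) → ℝ, ContDiff ℝ 1 u →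
      ∃ m : ℝ, ∫ x in Metric.closedBall 0 R, (u x - m) ^ 2 ≤
        C * ∫ x in Metric.closedBall 0 R, ‖fderiv ℝ u x‖ ^ 2 := by
  refine ⟨4 * R ^ 2 * 2 ^ d, by positivity, fun u hu => ?_⟩
  have hfc : Continuous (fderiv ℝ u) := hu.continuous_fderiv (by norm_num)
  have huc := hu.continuous
  set B : Set (EuclideanSpace ℝ (Fin d)) := Metric.closedBall 0 R with hB
  have hBm : MeasurableSet B := Metric.isClosed_closedBall.measurableSet
  set G : EuclideanSpace ℝ (Fin d) → ENNReal :=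
    B.indicator (fun z => ENNReal.ofReal (‖fderiv ℝ u z‖ ^ 2)) with hGdef
  have hG : Measurable G := Measurable.indicator (by fun_prop) hBm
  set I := ∫⁻ z, G z with hI
  have hvol0 : volume B ≠ 0 := (Metric.measure_closedBall_pos _ _ hR).ne'
  have hvolt : volume B ≠ ⊤ := measure_closedBall_lt_top.ne
  have seg : ∀ x ∈ B, ∀ y ∈ B, ENNReal.ofReal ((u y - u x) ^ 2) ≤
      ∫⁻ t in Set.Ioc (0:ℝ) 1, ENNReal.ofReal (4 * R ^ 2) * G ((1 - t) • x + t • y) := by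
    intro x hx y hy
    have h1 := wp_seg u hu R x y (by simpa [hB] using hx) (by simpa [hB] using hy)
    refine (ENNReal.ofReal_le_ofReal h1).trans ?_
    rw [intervalIntegral.integral_of_le (by norm_num), ofReal_integral_eq_lintegral_ofReal]
    · refine setLIntegral_mono' measurableSet_Ioc fun t ht => ?_
      have hz : (1 - t) • x + t • y ∈ B :=
        (convex_closedBall 0 R) hx hy (by linarith [ht.2]) ht.1.le (by ring)
      rw [hGdef, Set.indicator_of_mem hz, ENNReal.ofReal_mul (by positivity)]
    · exact (Continuous.integrableOn_Icc (by fun_prop)).mono_set Set.Ioc_subset_Icc_self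
    · exact Filter.Eventually.of_forall fun t => by positivity
  have key : ∀ t ∈ Set.Ioc (0:ℝ) 1, ∫⁻ x in B, ∫⁻ y in B, G ((1 - t) • x + t • y) ≤
      ENNReal.ofReal (2 ^ d) * I * volume B := by
    have half : ∀ s t : ℝ, 1/2 ≤ t → ∫⁻ x in B, ∫⁻ y in B, G (s • x + t • y) ≤
      ENNReal.ofReal (2 ^ d) * I * volume B := by
      intro s t ht
      calc ∫⁻ x in B, ∫⁻ y in B, G (s • x + t • y)
          ≤ ∫⁻ x in B, ENNReal.ofReal (2 ^ d) * I := by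
            refine lintegral_mono fun x => ?_
            exact (setLIntegral_le_lintegral _ _).trans (wp_scale G hG _ t ht)
        _ = _ := by rw [setLIntegral_const]
    intro t ht
    rcases le_total (1/2) t with h | h
    · exact half _ _ h
    · rw [lintegral_lintegral_swap (by
        refine Measurable.aemeasurable ?_
        exact hG.comp (by fun_prop))]
      simp_rw [add_comm ((1 - t) • _)]
      exact half t (1 - t) (by linarith)
  have dbl : ∫⁻ x in B, ∫⁻ y in B, ENNReal.ofReal ((u y - u x) ^ 2) ≤
      ENNReal.ofReal (4 * R ^ 2) * (ENNReal.ofReal (2 ^ d) * I * volume B) := by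
    calc ∫⁻ x in B, ∫⁻ y in B, ENNReal.ofReal ((u y - u x) ^ 2)
        ≤ ∫⁻ x in B, ∫⁻ y in B, ∫⁻ t in Set.Ioc (0:ℝ) 1,
            ENNReal.ofReal (4 * R ^ 2) * G ((1 - t) • x + t • y) := by
          refine setLIntegral_mono' hBm fun x hx => setLIntegral_mono' hBm fun y hy => seg x hx y hy
      _ = ∫⁻ x in B, ∫⁻ t in Set.Ioc (0:ℝ) 1, ∫⁻ y in B,
            ENNReal.ofReal (4 * R ^ 2) * G ((1 - t) • x + t • y) := by
          refine lintegral_congr fun x => ?_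
          refine lintegral_lintegral_swap (Measurable.aemeasurable ?_)
          exact (hG.comp (by fun_prop)).const_mul _
      _ = ∫⁻ t in Set.Ioc (0:ℝ) 1, ∫⁻ x in B, ∫⁻ y in B,
            ENNReal.ofReal (4 * R ^ 2) * G ((1 - t) • x + t • y) := by
          refine lintegral_lintegral_swap (Measurable.aemeasurable ?_)
          refine Measurable.lintegral_prod_right' (f := fun p : ((EuclideanSpace ℝ (Fin d)) × ℝ) × (EuclideanSpace ℝ (Fin d)) => ENNReal.ofReal (4 * R ^ 2) * G ((1 - p.1.2) • p.1.1 + p.1.2 • p.2)) ?_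
          exact (hG.comp (by fun_prop)).const_mul _
      _ = ∫⁻ t in Set.Ioc (0:ℝ) 1, ENNReal.ofReal (4 * R ^ 2) * ∫⁻ x in B, ∫⁻ y in B,
            G ((1 - t) • x + t • y) := by
          refine lintegral_congr fun t => ?_
          simp_rw [lintegral_const_mul' _ _ ENNReal.ofReal_ne_top]
      _ ≤ ∫⁻ t in Set.Ioc (0:ℝ) 1,
            ENNReal.ofReal (4 * R ^ 2) * (ENNReal.ofReal (2 ^ d) * I * volume B) := by
          refine setLIntegral_mono' measurableSet_Ioc fun t ht => ?_
          gcongr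
          exact key t ht
      _ = _ := by rw [setLIntegral_const]; simp
  obtain ⟨x₀, -, hx₀⟩ := exists_le_setLAverage (μ := volume) (s := B)
    (f := fun x => ∫⁻ y in B, ENNReal.ofReal ((u y - u x) ^ 2)) hvol0 hvolt (by
      refine Measurable.aemeasurable ?_
      refine Measurable.lintegral_prod_right' (f := fun p : (EuclideanSpace ℝ (Fin d)) × (EuclideanSpace ℝ (Fin d)) => ENNReal.ofReal ((u p.2 - u p.1) ^ 2)) ?_
      fun_prop)
  refine ⟨u x₀, ?_⟩
  have hIeq : I = ENNReal.ofReal (∫ x in B, ‖fderiv ℝ u x‖ ^ 2) := by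
    rw [ofReal_integral_eq_lintegral_ofReal, hI, hGdef, lintegral_indicator hBm]
    · exact ContinuousOn.integrableOn_compact (isCompact_closedBall _ _) (Continuous.continuousOn (by fun_prop))
    · exact Filter.Eventually.of_forall fun t => by positivity
  have hfin : ENNReal.ofReal (∫ x in B, (u x - u x₀) ^ 2) ≤
      ENNReal.ofReal (4 * R ^ 2 * 2 ^ d * ∫ x in B, ‖fderiv ℝ u x‖ ^ 2) := by
    rw [ofReal_integral_eq_lintegral_ofReal]
    · refine hx₀.trans ?_
      rw [setLAverage_eq]
      refine (ENNReal.div_le_div_right dbl _).trans ?_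
      rw [hIeq, ENNReal.ofReal_mul (p := 4 * R ^ 2 * 2 ^ d) (by positivity),
        ENNReal.ofReal_mul (p := 4 * R ^ 2) (by positivity),
        ← mul_assoc, ← mul_assoc, ENNReal.mul_div_cancel_right hvol0 hvolt]
    · exact ContinuousOn.integrableOn_compact (isCompact_closedBall _ _) (Continuous.continuousOn (by fun_prop))
    · exact Filter.Eventually.of_forall fun t => by positivity
  refine (ENNReal.ofReal_le_ofReal_iff ?_).1 hfin
  have : 0 ≤ ∫ x in B, ‖fderiv ℝ u x‖ ^ 2 := integral_nonneg fun x => by positivity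
  positivity

def wpW {d : ℕ} (γ s : ℝ) (x : EuclideanSpace ℝ (Fin d)) : ℝ :=
  (1 + ‖x‖ ^ 2) ^ s * Real.exp (-(1 + ‖x‖ ^ 2) ^ (γ/2))

lemma wpW_pos {d : ℕ} (γ s : ℝ) (x : EuclideanSpace ℝ (Fin d)) : 0 < wpW γ s x := by
  unfold wpW; positivity

lemma wpW_cont {d : ℕ} (γ s : ℝ) : Continuous (fun x : EuclideanSpace ℝ (Fin d) => wpW γ s x) := by
  unfold wpW
  have h : ∀ t : ℝ, Continuous (fun x : EuclideanSpace ℝ (Fin d) => (1 + ‖x‖ ^ 2) ^ t) := by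
    intro t
    refine Continuous.rpow_const (by fun_prop) fun x => Or.inl (by positivity)
  exact (h s).mul (Real.continuous_exp.comp (h (γ/2)).neg)

lemma wpW_add {d : ℕ} (γ s t : ℝ) (x : EuclideanSpace ℝ (Fin d)) :
    wpW γ (s + t) x = (1 + ‖x‖ ^ 2) ^ t * wpW γ s x := by
  unfold wpW
  rw [Real.rpow_add (by positivity)]; ring

lemma wpW_add_one {d : ℕ} (γ s : ℝ) (x : EuclideanSpace ℝ (Fin d)) :
    wpW γ (s + 1) x = (1 + ‖x‖ ^ 2) * wpW γ s x := by
  rw [wpW_add, Real.rpow_one]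

lemma wpW_mono {d : ℕ} (γ : ℝ) {s t : ℝ} (h : s ≤ t) (x : EuclideanSpace ℝ (Fin d)) :
    wpW γ s x ≤ wpW γ t x := by
  unfold wpW
  gcongr
  nlinarith [sq_nonneg ‖x‖]

lemma wpW_int {d : ℕ} (γ : ℝ) (hγ : 0 < γ) (s : ℝ) :
    Integrable (fun x : EuclideanSpace ℝ (Fin d) => wpW γ s x) := by
  obtain ⟨n, hn⟩ := exists_nat_gt ((s + (d + 1) / 2) / (γ / 2))
  have hn' : s + (d + 1) / 2 ≤ n * (γ / 2) := by
    rw [div_lt_iff₀ (by positivity)] at hn; exact hn.le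
  have hi := (integrable_rpow_neg_one_add_norm_sq (E := EuclideanSpace ℝ (Fin d)) (μ := volume)
    (r := d + 1) (by simp)).const_mul (n.factorial : ℝ)
  refine hi.mono' (wpW_cont γ s).aestronglyMeasurable (Filter.Eventually.of_forall fun x => ?_)
  rw [Real.norm_eq_abs, abs_of_pos (wpW_pos γ s x)]
  unfold wpW
  set J := 1 + ‖x‖ ^ 2 with hJ
  have hJ1 : 1 ≤ J := by nlinarith [sq_nonneg ‖x‖]
  have hJ0 : 0 < J := by linarith
  have h1 := Real.pow_div_factorial_le_exp (x := J ^ (γ/2)) (by positivity) n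
  have hf : (0:ℝ) < n.factorial := by positivity
  have h2 : Real.exp (-J ^ (γ/2)) ≤ n.factorial * J ^ (-(n * (γ/2))) := by
    rw [Real.exp_neg, Real.rpow_neg hJ0.le, mul_comm (n:ℝ), Real.rpow_mul hJ0.le, Real.rpow_natCast]
    rw [inv_le_comm₀ (Real.exp_pos _) (by positivity)]
    refine le_trans (le_of_eq ?_) h1
    field_simp
  calc J ^ s * Real.exp (-J ^ (γ/2)) ≤ J ^ s * (n.factorial * J ^ (-(n * (γ/2)))) := by gcongr
    _ = n.factorial * J ^ (s - n * (γ/2)) := by rw [sub_eq_add_neg, Real.rpow_add hJ0]; ring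
    _ ≤ n.factorial * J ^ (-((d:ℝ) + 1) / 2) := by
      gcongr
      linarith

lemma wp_int_mul {d : ℕ} (γ : ℝ) (hγ : 0 < γ) (s : ℝ) (h : EuclideanSpace ℝ (Fin d) → ℝ)
    (hc : Continuous h) (C : ℝ) (hb : ∀ x, |h x| ≤ C * (1 + ‖x‖ ^ 2)) :
    Integrable (fun x => h x * wpW γ s x) := by
  refine ((wpW_int (d := d) γ hγ (s + 1)).const_mul C).mono'
    (hc.mul (wpW_cont γ s)).aestronglyMeasurable (Filter.Eventually.of_forall fun x => ?_)
  rw [Real.norm_eq_abs, abs_mul, abs_of_pos (wpW_pos γ s x), wpW_add_one, ← mul_assoc]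
  exact mul_le_mul_of_nonneg_right (hb x) (wpW_pos γ s x).le

lemma wp_int_bdd {d : ℕ} (γ : ℝ) (hγ : 0 < γ) (s : ℝ) (h : EuclideanSpace ℝ (Fin d) → ℝ)
    (hc : Continuous h) (C : ℝ) (hb : ∀ x, |h x| ≤ C) :
    Integrable (fun x => h x * wpW γ s x) := by
  refine wp_int_mul γ hγ s h hc C fun x => ?_
  have := hb x
  have h0 := abs_nonneg (h x)
  nlinarith [mul_nonneg (h0.trans this) (sq_nonneg ‖x‖)]

lemma wp_deriv {d : ℕ} (γ : ℝ) (i : Fin d) (x : EuclideanSpace ℝ (Fin d)) :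
    HasFDerivAt (fun x : EuclideanSpace ℝ (Fin d) => x i * wpW γ (γ/2-1) x)
      (x i • (((γ/2-1) * wpW γ (γ/2-2) x - γ/2 * wpW γ (γ-2) x) • (2 • innerSL ℝ x)) +
        wpW γ (γ/2-1) x • (EuclideanSpace.proj i : EuclideanSpace ℝ (Fin d) →L[ℝ] ℝ)) x := by
  have hp : HasFDerivAt (fun x : EuclideanSpace ℝ (Fin d) => x i)
    (EuclideanSpace.proj i : EuclideanSpace ℝ (Fin d) →L[ℝ] ℝ) x :=
    (EuclideanSpace.proj i : EuclideanSpace ℝ (Fin d) →L[ℝ] ℝ).hasFDerivAt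
  have hJ : HasFDerivAt (fun x : EuclideanSpace ℝ (Fin d) => 1 + ‖x‖ ^ 2) (2 • innerSL ℝ x) x :=
    (hasStrictFDerivAt_norm_sq x).hasFDerivAt.const_add 1
  have hJ0 : (0:ℝ) < 1 + ‖x‖ ^ 2 := by positivity
  have hφ : HasDerivAt (fun s : ℝ => s ^ (γ/2-1) * Real.exp (-s ^ (γ/2)))
      ((γ/2-1) * wpW γ (γ/2-2) x - γ/2 * wpW γ (γ-2) x) (1 + ‖x‖ ^ 2) := by
    have h1 := Real.hasDerivAt_rpow_const (x := 1 + ‖x‖ ^ 2) (p := γ/2-1) (Or.inl hJ0.ne')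
    have h2 := (Real.hasDerivAt_rpow_const (x := 1 + ‖x‖ ^ 2) (p := γ/2) (Or.inl hJ0.ne')).neg.exp
    refine (h1.mul h2).congr_deriv ?_
    unfold wpW
    have e : γ - 2 = (γ/2 - 1) + (γ/2 - 1) := by ring
    have e' : γ/2 - 2 = γ/2 - 1 - 1 := by ring
    rw [e, Real.rpow_add hJ0, e']
    simp only [Pi.neg_apply]
    ring
  have := hp.mul (hφ.comp_hasFDerivAt x hJ)
  exact this

lemma wp_ibp {d : ℕ} (γ : ℝ) (hγ : 0 < γ) (v : EuclideanSpace ℝ (Fin d) → ℝ)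
    (hv : ContDiff ℝ 1 v) (C : ℝ) (hC : ∀ x, |v x| ≤ C) (hC' : ∀ x, ‖fderiv ℝ v x‖ ≤ C) :
    Integrable (fun x => v x ^ 2 * (d * wpW γ (γ/2-1) x + 2 * ‖x‖ ^ 2 *
      ((γ/2-1) * wpW γ (γ/2-2) x - γ/2 * wpW γ (γ-2) x)) +
      2 * v x * fderiv ℝ v x x * wpW γ (γ/2-1) x) ∧
    ∫ x, (v x ^ 2 * (d * wpW γ (γ/2-1) x + 2 * ‖x‖ ^ 2 *
      ((γ/2-1) * wpW γ (γ/2-2) x - γ/2 * wpW γ (γ-2) x)) +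
      2 * v x * fderiv ℝ v x x * wpW γ (γ/2-1) x) = 0 := by
  have hvc := hv.continuous
  have hfc : Continuous (fderiv ℝ v) := hv.continuous_fderiv (by norm_num)
  have hC0 : 0 ≤ C := (abs_nonneg _).trans (hC 0)
  have hxi : ∀ (x : EuclideanSpace ℝ (Fin d)) i, |x i| ≤ ‖x‖ := fun x i => by
    simpa using EuclideanSpace.norm_eq x ▸ PiLp.norm_apply_le x i
  have hv2 : ∀ x, v x ^ 2 ≤ C ^ 2 := fun x => sq_le_sq' (abs_le.1 (hC x)).1 (abs_le.1 (hC x)).2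
  have hdv : ∀ x i, |fderiv ℝ v x (EuclideanSpace.single i 1)| ≤ C := fun x i => by
    have := (fderiv ℝ v x).le_opNorm (EuclideanSpace.single i 1)
    simp at this
    exact this.trans (hC' x)
  have hD : ∀ i x, fderiv ℝ (fun x : EuclideanSpace ℝ (Fin d) => x i * wpW γ (γ/2-1) x) x
      (EuclideanSpace.single i 1) = wpW γ (γ/2-1) x + 2 * (x i) ^ 2 *
      ((γ/2-1) * wpW γ (γ/2-2) x - γ/2 * wpW γ (γ-2) x) := by
    intro i x
    rw [(wp_deriv γ i x).fderiv]
    have hin : inner ℝ x (EuclideanSpace.single i (1:ℝ)) = x i := by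
      rw [EuclideanSpace.inner_single_right]; simp
    simp [hin]
    ring
  have hD2 : ∀ i x, fderiv ℝ (fun x => v x ^ 2) x (EuclideanSpace.single i 1) =
      2 * v x * fderiv ℝ v x (EuclideanSpace.single i 1) := by
    intro i x
    have := ((hv.differentiable (by norm_num)) x).hasFDerivAt.pow 2
    rw [this.fderiv]
    simp
  have i1 : ∀ i, Integrable (fun x => v x ^ 2 * (wpW γ (γ/2-1) x + 2 * (x i) ^ 2 *
      ((γ/2-1) * wpW γ (γ/2-2) x - γ/2 * wpW γ (γ-2) x))) := by
    intro i
    have a1 := wp_int_bdd γ hγ (γ/2-1) (fun x => v x ^ 2) (by fun_prop) (C ^ 2) (fun x => by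
      rw [abs_of_nonneg (sq_nonneg _)]; exact hv2 x)
    have a2 : ∀ s, Integrable (fun x => (v x ^ 2 * (x i) ^ 2) * wpW γ s x) := fun s => by
      refine wp_int_mul γ hγ s _ (by fun_prop) (C ^ 2) (fun x => ?_)
      rw [abs_of_nonneg (by positivity)]
      have : (x i) ^ 2 ≤ ‖x‖ ^ 2 := by
        rw [← sq_abs]; gcongr; exact hxi x i
      exact mul_le_mul (hv2 x) (by linarith) (sq_nonneg _) (sq_nonneg _)
    refine ((a1.add ((a2 (γ/2-2)).const_mul (2 * (γ/2-1)))).sub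
      ((a2 (γ-2)).const_mul (2 * (γ/2)))).congr (Filter.Eventually.of_forall fun x => ?_)
    simp only [Pi.add_apply, Pi.sub_apply]
    ring
  have habs : ∀ (x : EuclideanSpace ℝ (Fin d)) i, |x i| ≤ 1 + ‖x‖ ^ 2 := fun x i => by
    nlinarith [hxi x i, sq_nonneg (‖x‖ - 1), norm_nonneg x]
  have i2 : ∀ i, Integrable (fun x => 2 * v x * fderiv ℝ v x (EuclideanSpace.single i 1) *
      (x i * wpW γ (γ/2-1) x)) := by
    intro i
    have hcc : Continuous fun x => fderiv ℝ v x (EuclideanSpace.single i 1) :=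
      hfc.clm_apply continuous_const
    refine (wp_int_mul γ hγ (γ/2-1) (fun x => 2 * v x * fderiv ℝ v x (EuclideanSpace.single i 1) *
      x i) (by fun_prop) (2 * C * C) (fun x => ?_)).congr (Filter.Eventually.of_forall fun x => ?_)
    · rw [abs_mul, abs_mul, abs_mul, abs_two]
      gcongr
      · exact hC x
      · exact hdv x i
      · exact habs x i
    · ring
  have i3 : ∀ i, Integrable (fun x => v x ^ 2 * (x i * wpW γ (γ/2-1) x)) := by
    intro i
    refine (wp_int_mul γ hγ (γ/2-1) (fun x => v x ^ 2 *
      x i) (by fun_prop) (C ^ 2) (fun x => ?_)).congr (Filter.Eventually.of_forall fun x => ?_)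
    · rw [abs_mul, abs_of_nonneg (sq_nonneg _)]
      exact mul_le_mul (hv2 x) (habs x i) (abs_nonneg _) (sq_nonneg _)
    · ring
  have ibp : ∀ i, ∫ x, v x ^ 2 * (wpW γ (γ/2-1) x + 2 * (x i) ^ 2 *
      ((γ/2-1) * wpW γ (γ/2-2) x - γ/2 * wpW γ (γ-2) x)) =
      - ∫ x, 2 * v x * fderiv ℝ v x (EuclideanSpace.single i 1) * (x i * wpW γ (γ/2-1) x) := by
    intro i
    have := integral_mul_fderiv_eq_neg_fderiv_mul_of_integrable (μ := volume)
      (f := fun x => v x ^ 2) (g := fun x : EuclideanSpace ℝ (Fin d) => x i * wpW γ (γ/2-1) x)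
      (v := EuclideanSpace.single i 1) (by simpa only [hD2] using i2 i)
      (by simpa only [hD] using i1 i) (i3 i)
      (fun x _ => ((hv.differentiable (by norm_num)) x).pow 2)
      (fun x _ => (wp_deriv γ i x).differentiableAt)
    simpa only [hD, hD2] using this
  have hsum : ∀ x, v x ^ 2 * (d * wpW γ (γ/2-1) x + 2 * ‖x‖ ^ 2 *
      ((γ/2-1) * wpW γ (γ/2-2) x - γ/2 * wpW γ (γ-2) x)) +
      2 * v x * fderiv ℝ v x x * wpW γ (γ/2-1) x =
      ∑ i, (v x ^ 2 * (wpW γ (γ/2-1) x + 2 * (x i) ^ 2 *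
      ((γ/2-1) * wpW γ (γ/2-2) x - γ/2 * wpW γ (γ-2) x)) + 
      2 * v x * fderiv ℝ v x (EuclideanSpace.single i 1) * (x i * wpW γ (γ/2-1) x)) := by
    intro x
    have e1 : ‖x‖ ^ 2 = ∑ i, (x i) ^ 2 := EuclideanSpace.real_norm_sq_eq x
    have e2 : fderiv ℝ v x x = ∑ i, x i * fderiv ℝ v x (EuclideanSpace.single i 1) := by
      have : x = ∑ i, x i • (EuclideanSpace.single i (1:ℝ) : EuclideanSpace ℝ (Fin d)) := by
        ext j
        simp [Finset.sum_apply, Pi.single_apply]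
      have h2 := congrArg (fderiv ℝ v x) this
      rw [map_sum] at h2
      simpa only [map_smul, smul_eq_mul] using h2
    rw [Finset.sum_add_distrib, ← Finset.mul_sum, Finset.sum_add_distrib, ← Finset.sum_mul,
      ← Finset.mul_sum, ← e1, e2]
    simp only [Finset.sum_const, Finset.card_univ, Fintype.card_fin, nsmul_eq_mul]
    congr 1
    rw [Finset.mul_sum, Finset.sum_mul]
    exact Finset.sum_congr rfl fun i _ => by ring
  have i12 : ∀ i, Integrable (fun x => v x ^ 2 * (wpW γ (γ/2-1) x + 2 * (x i) ^ 2 *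
      ((γ/2-1) * wpW γ (γ/2-2) x - γ/2 * wpW γ (γ-2) x)) +
      2 * v x * fderiv ℝ v x (EuclideanSpace.single i 1) * (x i * wpW γ (γ/2-1) x)) :=
    fun i => (i1 i).add (i2 i)
  simp only [hsum]
  refine ⟨integrable_finsetSum _ fun i _ => i12 i, ?_⟩
  rw [integral_finsetSum _ fun i _ => i12 i]
  refine Finset.sum_eq_zero fun i _ => ?_
  rw [integral_add (i1 i) (i2 i), ibp i]
  ring

lemma wp_pointwise {d : ℕ} (γ : ℝ) (hγ : γ ∈ Set.Ioo (0:ℝ) 1) :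
    ∃ R > (0:ℝ), ∀ x : EuclideanSpace ℝ (Fin d),
      (d * wpW γ (γ/2-1) x + 2 * ‖x‖ ^ 2 *
        ((γ/2-1) * wpW γ (γ/2-2) x - γ/2 * wpW γ (γ-2) x)) ≤
        -(γ/2) * wpW γ (γ-1) x + (Metric.closedBall 0 R).indicator (fun _ => (d + 1 : ℝ)) x := by
  obtain ⟨h0, h1⟩ := hγ
  set M : ℝ := (2 * (d + 1) / γ) ^ (2/γ) with hM
  have hM0 : 0 < M := by positivity
  refine ⟨M + 1, by positivity, fun x => ?_⟩
  have e1 : wpW γ (γ-1) x = (1 + ‖x‖ ^ 2) ^ (γ/2) * wpW γ (γ/2-1) x := by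
    rw [← wpW_add]; congr 1; ring
  have e2 : wpW γ (γ-1) x = (1 + ‖x‖ ^ 2) * wpW γ (γ-2) x := by
    rw [← wpW_add_one]; congr 1; ring
  have e3 : wpW γ (γ-2) x ≤ wpW γ (γ/2-1) x := wpW_mono γ (by linarith) x
  have p1 := wpW_pos γ (γ/2-2) x
  have p2 := wpW_pos γ (γ/2-1) x
  have p3 := wpW_pos γ (γ-2) x
  have main : (d * wpW γ (γ/2-1) x + 2 * ‖x‖ ^ 2 *
        ((γ/2-1) * wpW γ (γ/2-2) x - γ/2 * wpW γ (γ-2) x)) ≤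
        (d + 1) * wpW γ (γ/2-1) x - γ * wpW γ (γ-1) x := by
    rw [e2]
    have q1 : 0 ≤ ‖x‖ ^ 2 * ((1 - γ/2) * wpW γ (γ/2-2) x) := by
      have : 0 ≤ 1 - γ/2 := by linarith
      positivity
    have q2 : γ * wpW γ (γ-2) x ≤ 1 * wpW γ (γ/2-1) x := by gcongr
    nlinarith
  refine main.trans ?_
  by_cases hx : x ∈ Metric.closedBall (0 : EuclideanSpace ℝ (Fin d)) (M + 1)
  · rw [Set.indicator_of_mem hx]
    have hg : wpW γ (γ/2-1) x ≤ 1 := by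
      unfold wpW
      have a : (1 + ‖x‖ ^ 2) ^ (γ/2-1) ≤ 1 :=
        Real.rpow_le_one_of_one_le_of_nonpos (by nlinarith [sq_nonneg ‖x‖]) (by linarith)
      have b : Real.exp (-(1 + ‖x‖ ^ 2) ^ (γ/2)) ≤ 1 :=
        Real.exp_le_one_iff.2 (neg_nonpos.2 (by positivity))
      exact mul_le_one₀ a (Real.exp_pos _).le b
    have := wpW_pos γ (γ-1) x
    have hd : (0:ℝ) ≤ d + 1 := by positivity
    nlinarith [mul_le_mul_of_nonneg_left hg hd, mul_pos h0 this]
  · rw [Set.indicator_of_notMem hx, e1]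
    have hx' : M + 1 < ‖x‖ := by simpa using hx
    have hJ : M ≤ 1 + ‖x‖ ^ 2 := by nlinarith
    have hk : 2 * (d + 1) / γ ≤ (1 + ‖x‖ ^ 2) ^ (γ/2) := by
      calc 2 * ((d:ℝ) + 1) / γ = M ^ (γ/2) := by
            rw [hM, ← Real.rpow_mul (by positivity)]
            have : 2 / γ * (γ / 2) = 1 := by field_simp
            rw [this, Real.rpow_one]
        _ ≤ _ := by gcongr
    rw [div_le_iff₀ h0] at hk
    nlinarith [mul_le_mul_of_nonneg_right hk p2.le]

lemma wp_centered (d : ℕ) (γ : ℝ) (hγ : γ ∈ Set.Ioo (0:ℝ) 1) :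
    ∃ C > (0:ℝ), ∀ u : EuclideanSpace ℝ (Fin d) → ℝ, ContDiff ℝ 1 u → HasCompactSupport u →
      ∃ m : ℝ, ∫ x, (u x - m) ^ 2 * wpW γ (γ-1) x ≤ C * ∫ x, ‖fderiv ℝ u x‖ ^ 2 * wpW γ 0 x := by
  obtain ⟨R, hR, hpt⟩ := wp_pointwise (d := d) γ hγ
  obtain ⟨K, hK, hball⟩ := wp_ball d R hR
  obtain ⟨h0, h1⟩ := hγ
  set L := Real.exp ((1 + R ^ 2) ^ (γ/2)) with hL
  have hL0 : 0 < L := Real.exp_pos _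
  refine ⟨4 / γ * (4 / γ + (d + 1) * (K * L)), by positivity, fun u hu hcs => ?_⟩
  obtain ⟨m, hm⟩ := hball u hu
  refine ⟨m, ?_⟩
  have huc := hu.continuous
  have hfc : Continuous (fderiv ℝ u) := hu.continuous_fderiv (by norm_num)
  obtain ⟨C1, hC1⟩ := hcs.exists_bound_of_continuous huc
  obtain ⟨C2, hC2⟩ := (hcs.fderiv (𝕜 := ℝ)).exists_bound_of_continuous hfc
  set v : EuclideanSpace ℝ (Fin d) → ℝ := fun x => u x - m with hv
  have hfd : ∀ x, fderiv ℝ v x = fderiv ℝ u x := fun x => by rw [hv, fderiv_sub_const]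
  have hvC : ContDiff ℝ 1 v := hu.sub contDiff_const
  have hvc := hvC.continuous
  set C := max (C1 + |m|) C2
  have hb1 : ∀ x, |v x| ≤ C := fun x =>
    ((abs_sub _ _).trans (add_le_add_left (hC1 x) _)).trans (le_max_left _ _)
  have hb2 : ∀ x, ‖fderiv ℝ v x‖ ≤ C := fun x => by
    rw [hfd]; exact (hC2 x).trans (le_max_right _ _)
  obtain ⟨ii, hi⟩ := wp_ibp γ h0 v hvC C hb1 hb2
  have hC0 : 0 ≤ C := (abs_nonneg _).trans (hb1 0)
  have hsq : ∀ a : ℝ, |a| ≤ C → |a ^ 2| ≤ C ^ 2 := fun a ha => by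
    rw [abs_pow]; gcongr
  have iQ : Integrable (fun x => v x ^ 2 * wpW γ (γ-1) x) :=
    wp_int_bdd γ h0 _ (fun x => v x ^ 2) (by fun_prop) (C ^ 2) (fun x => hsq _ (hb1 x))
  have iD : Integrable (fun x => ‖fderiv ℝ u x‖ ^ 2 * wpW γ 0 x) :=
    wp_int_bdd γ h0 _ (fun x => ‖fderiv ℝ u x‖ ^ 2) (by fun_prop) (C ^ 2)
      (fun x => hsq _ (by rw [abs_norm, ← hfd]; exact hb2 x))
  set B : Set (EuclideanSpace ℝ (Fin d)) := Metric.closedBall 0 R with hB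
  have hBm : MeasurableSet B := Metric.isClosed_closedBall.measurableSet
  have iB : Integrable (B.indicator fun x => v x ^ 2) := by
    rw [integrable_indicator_iff hBm]
    exact ContinuousOn.integrableOn_compact (isCompact_closedBall _ _)
      (Continuous.continuousOn (by fun_prop))
  have pw : ∀ x, γ / 4 * (v x ^ 2 * wpW γ (γ-1) x) ≤
      4 / γ * (‖fderiv ℝ u x‖ ^ 2 * wpW γ 0 x) + (d + 1) * B.indicator (fun x => v x ^ 2) x
      - (v x ^ 2 * (d * wpW γ (γ/2-1) x + 2 * ‖x‖ ^ 2 *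
      ((γ/2-1) * wpW γ (γ/2-2) x - γ/2 * wpW γ (γ-2) x)) +
      2 * v x * fderiv ℝ v x x * wpW γ (γ/2-1) x) := by
    intro x
    have q1 := mul_le_mul_of_nonneg_left (hpt x) (sq_nonneg (v x))
    have q2 : v x ^ 2 * B.indicator (fun _ => (d + 1 : ℝ)) x =
        (d + 1) * B.indicator (fun x => v x ^ 2) x := by
      by_cases hx : x ∈ B
      · simp [hx]; ring
      · simp [hx]
    have q3 : 2 * v x * fderiv ℝ v x x * wpW γ (γ/2-1) x ≤
        γ / 4 * (v x ^ 2 * wpW γ (γ-1) x) + 4 / γ * (‖fderiv ℝ u x‖ ^ 2 * wpW γ 0 x) := by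
      set J : ℝ := 1 + ‖x‖ ^ 2 with hJ
      have hJ0 : 0 < J := by positivity
      set s : ℝ := J ^ ((γ-1)/2) with hs
      have hs0 : 0 < s := by positivity
      have w1 : wpW γ (γ-1) x = s ^ 2 * wpW γ 0 x := by
        rw [hs, ← Real.rpow_natCast, ← Real.rpow_mul hJ0.le, hJ, ← wpW_add]; congr 1; push_cast; ring
      have w2 : wpW γ (γ/2-1) x * ‖x‖ ≤ s * wpW γ 0 x := by
        have a1 : s * wpW γ 0 x = J ^ (1/2 : ℝ) * wpW γ (γ/2-1) x := by
          rw [hs, hJ, ← wpW_add, ← wpW_add]; congr 1; ring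
        rw [a1, mul_comm]
        have a2 : ‖x‖ ≤ J ^ (1/2 : ℝ) := by
          rw [← Real.sqrt_eq_rpow]
          exact Real.le_sqrt_of_sq_le (by rw [hJ]; linarith)
        exact mul_le_mul_of_nonneg_right a2 (wpW_pos _ _ _).le
      have pe := wpW_pos γ 0 x
      have f1 : |fderiv ℝ v x x| ≤ ‖fderiv ℝ u x‖ * ‖x‖ := by
        rw [hfd]; exact (fderiv ℝ u x).le_opNorm x
      rw [w1]
      set N := ‖fderiv ℝ u x‖
      have hN : 0 ≤ N := norm_nonneg _
      calc 2 * v x * fderiv ℝ v x x * wpW γ (γ/2-1) x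
          ≤ |2 * v x * fderiv ℝ v x x * wpW γ (γ/2-1) x| := le_abs_self _
        _ = 2 * |v x| * |fderiv ℝ v x x| * wpW γ (γ/2-1) x := by
          rw [abs_mul, abs_mul, abs_mul, abs_two, abs_of_pos (wpW_pos γ (γ/2-1) x)]
        _ ≤ 2 * |v x| * (N * ‖x‖) * wpW γ (γ/2-1) x := by
          have := (wpW_pos γ (γ/2-1) x).le
          gcongr
        _ = 2 * |v x| * N * (wpW γ (γ/2-1) x * ‖x‖) := by ring
        _ ≤ 2 * |v x| * N * (s * wpW γ 0 x) := by gcongr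
        _ ≤ (γ / 4 * (|v x| * s) ^ 2 + 4 / γ * N ^ 2) * wpW γ 0 x := by
          have : 2 * (|v x| * s) * N ≤ γ / 4 * (|v x| * s) ^ 2 + 4 / γ * N ^ 2 := by
            have h3 : 0 ≤ γ / 4 * ((|v x| * s) - 4 / γ * N) ^ 2 := by positivity
            have h4 : γ / 4 * ((|v x| * s) - 4 / γ * N) ^ 2 =
              γ / 4 * (|v x| * s) ^ 2 - 2 * (|v x| * s) * N + 4 / γ * N ^ 2 := by
              field_simp
              ring
            linarith
          calc 2 * |v x| * N * (s * wpW γ 0 x) = (2 * (|v x| * s) * N) * wpW γ 0 x := by ring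
            _ ≤ _ := mul_le_mul_of_nonneg_right this pe.le
        _ = _ := by rw [mul_pow, sq_abs]; ring
    rw [mul_add (v x ^ 2) (-(γ/2) * wpW γ (γ-1) x), q2] at q1
    linarith
  have iR := ((iD.const_mul (4/γ)).add (iB.const_mul ((d:ℝ)+1)))
  have hint := integral_mono (iQ.const_mul (γ/4)) (iR.sub ii) pw
  rw [integral_sub' iR ii, hi, integral_add' (iD.const_mul (4/γ)) (iB.const_mul ((d:ℝ)+1)),
    integral_const_mul, integral_const_mul, integral_const_mul, integral_indicator hBm] at hint
  have hloc : ∫ x in B, ‖fderiv ℝ u x‖ ^ 2 ≤ L * ∫ x, ‖fderiv ℝ u x‖ ^ 2 * wpW γ 0 x := by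
    rw [← integral_const_mul, ← integral_indicator hBm]
    refine integral_mono ?_ (iD.const_mul L) fun x => ?_
    · rw [integrable_indicator_iff hBm]
      exact ContinuousOn.integrableOn_compact (isCompact_closedBall _ _)
        (Continuous.continuousOn (by fun_prop))
    · have pe := wpW_pos γ 0 x
      by_cases hx : x ∈ B
      · simp only [Set.indicator_of_mem hx]
        have hx' : ‖x‖ ≤ R := by simpa [hB] using hx
        have : 1 ≤ L * wpW γ 0 x := by
          unfold wpW
          rw [Real.rpow_zero, one_mul, hL, ← Real.exp_add]
          apply Real.one_le_exp
          have : (1 + ‖x‖ ^ 2) ^ (γ/2) ≤ (1 + R ^ 2) ^ (γ/2) := by gcongr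
          linarith
        nlinarith [mul_le_mul_of_nonneg_left this (sq_nonneg ‖fderiv ℝ u x‖)]
      · simp only [Set.indicator_of_notMem hx]
        positivity
  set Q := ∫ x, v x ^ 2 * wpW γ (γ-1) x
  set D := ∫ x, ‖fderiv ℝ u x‖ ^ 2 * wpW γ 0 x
  have hh : ∫ x in B, v x ^ 2 ≤ K * L * D := by
    refine hm.trans ?_
    rw [mul_assoc]; gcongr
  have h5 : γ / 4 * Q ≤ (4 / γ + (d + 1) * (K * L)) * D := by
    have : ((d:ℝ) + 1) * ∫ x in B, v x ^ 2 ≤ (d + 1) * (K * L * D) := by gcongr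
    linarith
  calc Q = 4 / γ * (γ / 4 * Q) := by field_simp
    _ ≤ 4 / γ * ((4 / γ + (d + 1) * (K * L)) * D) := by gcongr
    _ = _ := by ring

lemma wp_alg (Z Y m s a p : ℝ) (hZ : 0 < Z) (hY : 0 < Y) (hp : 0 ≤ p) :
    m ^ 2 * (s ^ 2 * p) - m * (a * (s ^ 2 * p)) ≤
      m ^ 2 * (Z / (2 * Y)) * (s ^ 4 * p) + Y / (2 * Z) * ((a - m) ^ 2 * p) := by
  have : 0 ≤ Z / (2 * Y) * (m * s ^ 2 + Y / Z * (a - m)) ^ 2 * p := by positivity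
  have e : Z / (2 * Y) * (m * s ^ 2 + Y / Z * (a - m)) ^ 2 * p =
    m ^ 2 * (Z / (2 * Y)) * (s ^ 4 * p) + Y / (2 * Z) * ((a - m) ^ 2 * p) -
      (m ^ 2 * (s ^ 2 * p) - m * (a * (s ^ 2 * p))) := by
    field_simp
    ring
  linarith

theorem weak_poincare (d : ℕ) (γ : ℝ) (hγ : γ ∈ Set.Ioo (0:ℝ) 1) :
    ∃ lam > (0:ℝ),
      ∀ u : EuclideanSpace ℝ (Fin d) → ℝ, ContDiff ℝ (⊤ : ℕ∞) u → HasCompactSupport u →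
        (∫ x : EuclideanSpace ℝ (Fin d),
            u x * Real.exp (-(1 + ‖x‖ ^ 2) ^ (γ/2)) * (1 + ‖x‖ ^ 2) ^ (1 - γ)) = 0 →
        (∫ x : EuclideanSpace ℝ (Fin d),
            u x ^ 2 * (1 + ‖x‖ ^ 2) ^ (γ - 1) * Real.exp (-(1 + ‖x‖ ^ 2) ^ (γ/2)))
          ≤ lam * ∫ x : EuclideanSpace ℝ (Fin d),
              ‖gradient u x‖ ^ 2 * Real.exp (-(1 + ‖x‖ ^ 2) ^ (γ/2)) := by
  obtain ⟨C, hC, hmain⟩ := wp_centered d γ hγ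
  have h0 := hγ.1
  have hpos : ∀ s, 0 < ∫ x : EuclideanSpace ℝ (Fin d), wpW γ s x := fun s => by
    rw [integral_pos_iff_support_of_nonneg (fun x => (wpW_pos γ s x).le) (wpW_int γ h0 s)]
    have : Function.support (fun x : EuclideanSpace ℝ (Fin d) => wpW γ s x) = Set.univ := by
      ext x; simp [(wpW_pos γ s x).ne']
    rw [this]
    exact isOpen_univ.measure_pos volume Set.univ_nonempty
  set Z := ∫ x : EuclideanSpace ℝ (Fin d), wpW γ (1-γ) x with hZ
  set Y := ∫ x : EuclideanSpace ℝ (Fin d), wpW γ (3 * (1-γ)) x with hY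
  set X := ∫ x : EuclideanSpace ℝ (Fin d), wpW γ (γ-1) x with hX
  have hZ0 : 0 < Z := hpos _
  have hY0 : 0 < Y := hpos _
  have hX0 : 0 < X := hpos _
  refine ⟨(2 + 2 * X * (Y / Z ^ 2)) * C, by positivity, fun u hu hcs hmean => ?_⟩
  have hu1 : ContDiff ℝ 1 u := hu.of_le (by exact_mod_cast le_top)
  have huc := hu1.continuous
  obtain ⟨m, hm⟩ := hmain u hu1 hcs
  obtain ⟨C1, hC1⟩ := hcs.exists_bound_of_continuous huc
  have e1 : ∫ x, u x * Real.exp (-(1 + ‖x‖ ^ 2) ^ (γ/2)) * (1 + ‖x‖ ^ 2) ^ (1 - γ) =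
      ∫ x, u x * wpW γ (1-γ) x := integral_congr_ae (Filter.Eventually.of_forall fun x => by
        simp only [wpW]; ring)
  have e2 : ∫ x, u x ^ 2 * (1 + ‖x‖ ^ 2) ^ (γ - 1) * Real.exp (-(1 + ‖x‖ ^ 2) ^ (γ/2)) =
      ∫ x, u x ^ 2 * wpW γ (γ-1) x := integral_congr_ae (Filter.Eventually.of_forall fun x => by
        simp only [wpW]; ring)
  have e3 : ∫ x, ‖gradient u x‖ ^ 2 * Real.exp (-(1 + ‖x‖ ^ 2) ^ (γ/2)) =
      ∫ x, ‖fderiv ℝ u x‖ ^ 2 * wpW γ 0 x := integral_congr_ae (Filter.Eventually.of_forall fun x => by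
        simp only [wpW, gradient, LinearIsometryEquiv.norm_map, Real.rpow_zero, one_mul])
  rw [e1] at hmean
  rw [e2, e3]
  set D := ∫ x, ‖fderiv ℝ u x‖ ^ 2 * wpW γ 0 x
  set Q := ∫ x, (u x - m) ^ 2 * wpW γ (γ-1) x with hQ
  have hvb : ∀ x, |u x - m| ≤ C1 + |m| := fun x =>
    (abs_sub _ _).trans (add_le_add_left (hC1 x) _)
  have iQ : Integrable (fun x => (u x - m) ^ 2 * wpW γ (γ-1) x) :=
    wp_int_bdd γ h0 _ (fun x => (u x - m) ^ 2) (by fun_prop) ((C1 + |m|) ^ 2) (fun x => by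
      rw [abs_pow]; gcongr; exact hvb x)
  have iU : Integrable (fun x => u x ^ 2 * wpW γ (γ-1) x) :=
    wp_int_bdd γ h0 _ (fun x => u x ^ 2) (by fun_prop) (C1 ^ 2) (fun x => by
      rw [abs_pow]; gcongr; exact hC1 x)
  have iM : Integrable (fun x => u x * wpW γ (1-γ) x) :=
    wp_int_bdd γ h0 _ u huc C1 hC1
  have hm2 : m ^ 2 * Z ≤ m ^ 2 * (Z / 2) + Y / (2 * Z) * Q := by
    have i1 := ((wpW_int (d := d) γ h0 (1-γ)).const_mul (m ^ 2)).sub (iM.const_mul m)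
    have i2 := ((wpW_int (d := d) γ h0 (3 * (1-γ))).const_mul (m ^ 2 * (Z / (2 * Y)))).add
      (iQ.const_mul (Y / (2 * Z)))
    have := integral_mono i1 i2 fun x => by
      simp only [Pi.sub_apply, Pi.add_apply]
      set J : ℝ := 1 + ‖x‖ ^ 2 with hJ
      have hJ0 : 0 < J := by positivity
      set s : ℝ := J ^ (1-γ) with hs
      set p := wpW γ (γ-1) x with hp
      have pp : 0 < p := wpW_pos _ _ _
      have w1 : wpW γ (1-γ) x = s ^ 2 * p := by
        rw [hs, ← Real.rpow_natCast, ← Real.rpow_mul hJ0.le, hJ, hp, ← wpW_add]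
        congr 1; push_cast; ring
      have w2 : wpW γ (3 * (1-γ)) x = s ^ 4 * p := by
        rw [hs, ← Real.rpow_natCast, ← Real.rpow_mul hJ0.le, hJ, hp, ← wpW_add]
        congr 1; push_cast; ring
      rw [w1, w2]
      exact wp_alg Z Y m s (u x) p hZ0 hY0 pp.le
    rw [integral_sub' ((wpW_int (d := d) γ h0 (1-γ)).const_mul (m ^ 2)) (iM.const_mul m),
      integral_add' ((wpW_int (d := d) γ h0 (3 * (1-γ))).const_mul (m ^ 2 * (Z / (2 * Y))))
      (iQ.const_mul (Y / (2 * Z))), integral_const_mul, integral_const_mul, integral_const_mul,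
      integral_const_mul, hmean, ← hZ, ← hY, ← hQ, mul_zero, sub_zero] at this
    refine this.trans (le_of_eq ?_)
    field_simp
  have hm3 : m ^ 2 ≤ Y / Z ^ 2 * Q := by
    have h3 : m ^ 2 * (Z / 2) ≤ Y / (2 * Z) * Q := by linarith
    calc m ^ 2 = 2 / Z * (m ^ 2 * (Z / 2)) := by field_simp
      _ ≤ 2 / Z * (Y / (2 * Z) * Q) := by gcongr
      _ = _ := by field_simp
  have hfin : ∫ x, u x ^ 2 * wpW γ (γ-1) x ≤ 2 * Q + 2 * m ^ 2 * X := by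
    have i2 := (iQ.const_mul 2).add ((wpW_int (d := d) γ h0 (γ-1)).const_mul (2 * m ^ 2))
    have := integral_mono iU i2 fun x => by
      simp only [Pi.add_apply]
      have pp := wpW_pos γ (γ-1) x
      have : u x ^ 2 ≤ 2 * (u x - m) ^ 2 + 2 * m ^ 2 := by nlinarith [sq_nonneg (u x - 2 * m)]
      nlinarith [mul_le_mul_of_nonneg_right this pp.le]
    rwa [integral_add' (iQ.const_mul 2) ((wpW_int (d := d) γ h0 (γ-1)).const_mul (2 * m ^ 2)),
      integral_const_mul, integral_const_mul] at this
  calc ∫ x, u x ^ 2 * wpW γ (γ-1) x ≤ 2 * Q + 2 * m ^ 2 * X := hfin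
    _ ≤ 2 * Q + 2 * (Y / Z ^ 2 * Q) * X := by gcongr
    _ = (2 + 2 * X * (Y / Z ^ 2)) * Q := by ring
    _ ≤ (2 + 2 * X * (Y / Z ^ 2)) * (C * D) := by gcongr
    _ = _ := by ring
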